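/- Let I be a finite index type, let u : I → ℝ^n be vectors and w : I → ℝ nonnegative weights, and for a finite set C ⊆ I define f(C) = log det(I_n + Σ_{i∈C} w_i · u_i u_iᵀ). Then f is monotone and submodular: for all finite sets C ⊆ C' ⊆ I and every j ∉ C', one has f(C) ≤ f(C') and f(C' ∪ {j}) − f(C') ≤ f(C ∪ {j}) − f(C). -/

import Mathlib

open Matrix

lemma aux_det {n : ℕ} (A : Matrix (Fin n) (Fin n) ℝ) (hA : A.PosDef) (c : ℝ) (v : Fin n → ℝ) :
    (A + c • vecMulVec v v).det = A.det * (1 + c * (v ⬝ᵥ (A⁻¹ *ᵥ v))) := by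
  have hu : IsUnit A.det := (Matrix.isUnit_iff_isUnit_det A).1 hA.isUnit
  have h := det_add_replicateCol_mul_replicateRow (ι := Unit) hu (c • v) v
  rw [← vecMulVec_eq, smul_vecMulVec] at h
  rw [h]
  congr 1
  rw [det_unique, Matrix.mul_assoc, ← replicateCol_mulVec, mulVec_smul]
  simp [Matrix.mul_apply, dotProduct, Finset.mul_sum, mul_left_comm]

lemma aux_inv {n : ℕ} (A P : Matrix (Fin n) (Fin n) ℝ) (hA : A.PosDef) (hP : P.PosSemidef)
    (v : Fin n → ℝ) : v ⬝ᵥ ((A + P)⁻¹ *ᵥ v) ≤ v ⬝ᵥ (A⁻¹ *ᵥ v) := by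
  have hB : (A + P).PosDef := hA.add_posSemidef hP
  have hu : IsUnit A.det := (Matrix.isUnit_iff_isUnit_det A).1 hA.isUnit
  have hv : IsUnit (A + P).det := (Matrix.isUnit_iff_isUnit_det _).1 hB.isUnit
  obtain ⟨x, hx⟩ : ∃ x, x = (A + P)⁻¹ *ᵥ v := ⟨_, rfl⟩
  obtain ⟨y, hy⟩ : ∃ y, y = A⁻¹ *ᵥ v := ⟨_, rfl⟩
  have h1 : A *ᵥ x + P *ᵥ x = v := by
    rw [← add_mulVec, hx, mulVec_mulVec, mul_nonsing_inv _ hv, one_mulVec]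
  have h2 : A *ᵥ y = v := by
    rw [hy, mulVec_mulVec, mul_nonsing_inv _ hu, one_mulVec]
  rw [← hx, ← hy]
  have h3 := hA.posSemidef.dotProduct_mulVec_nonneg (x - y)
  have h4 := hP.dotProduct_mulVec_nonneg x
  have hs : y ⬝ᵥ (A *ᵥ x) = v ⬝ᵥ x := by
    have ht : Aᵀ = A := by simpa [IsHermitian] using hA.isHermitian
    rw [dotProduct_mulVec, ← mulVec_transpose, ht, h2]
  simp only [star_trivial, mulVec_sub, sub_dotProduct, dotProduct_sub, h2, hs] at h3 h4
  have h5 : x ⬝ᵥ v = x ⬝ᵥ (A *ᵥ x) + x ⬝ᵥ (P *ᵥ x) := by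
    rw [← dotProduct_add, h1]
  rw [dotProduct_comm x v] at *
  rw [dotProduct_comm y v] at *
  linarith

lemma aux_psd {n : ℕ} {I : Type*} (u : I → Fin n → ℝ) (w : I → ℝ) (hw : ∀ i, 0 ≤ w i)
    (C : Finset I) : (∑ i ∈ C, w i • vecMulVec (u i) (u i)).PosSemidef := by
  refine posSemidef_sum _ fun i _ => ?_
  have := posSemidef_vecMulVec_self_star (u i)
  rw [star_trivial] at this
  exact this.smul (hw i)

theorem stmt6 {n : ℕ} {I : Type*} [Fintype I] [DecidableEq I]
    (u : I → Fin n → ℝ) (w : I → ℝ) (hw : ∀ i, 0 ≤ w i)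
    (f : Finset I → ℝ)
    (hf : ∀ C : Finset I,
      f C = Real.log (1 + ∑ i ∈ C, w i • vecMulVec (u i) (u i)).det) :
    ∀ C C' : Finset I, C ⊆ C' → ∀ j ∉ C',
      f C ≤ f C' ∧ f (insert j C') - f C' ≤ f (insert j C) - f C := by
  have hpd : ∀ C : Finset I, (1 + ∑ i ∈ C, w i • vecMulVec (u i) (u i)).PosDef := fun C =>
    PosDef.one.add_posSemidef (aux_psd u w hw C)
  have hq : ∀ (C : Finset I) (j : I),
      0 ≤ w j * (u j ⬝ᵥ ((1 + ∑ i ∈ C, w i • vecMulVec (u i) (u i))⁻¹ *ᵥ u j)) := by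
    intro C j
    have := (hpd C).inv.posSemidef.dotProduct_mulVec_nonneg (u j)
    rw [star_trivial] at this
    exact mul_nonneg (hw j) this
  have hins : ∀ (C : Finset I) (j : I), j ∉ C → f (insert j C) = f C +
      Real.log (1 + w j * (u j ⬝ᵥ ((1 + ∑ i ∈ C, w i • vecMulVec (u i) (u i))⁻¹ *ᵥ u j))) := by
    intro C j hj
    rw [hf, hf, Finset.sum_insert hj, add_comm (w j • _), ← add_assoc, aux_det _ (hpd C),
      Real.log_mul (hpd C).det_pos.ne' (by linarith [hq C j])]
  have hmono : ∀ C D : Finset I, Disjoint C D → f C ≤ f (D ∪ C) := by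
    intro C D
    induction D using Finset.induction_on with
    | empty => intro _; simp
    | insert a D ha ih =>
      intro hd
      rw [Finset.disjoint_insert_right] at hd
      refine (ih hd.2).trans ?_
      rw [Finset.insert_union, hins _ _ (by simp [ha, hd.1])]
      linarith [Real.log_nonneg (x := 1 + w a * (u a ⬝ᵥ
        ((1 + ∑ i ∈ D ∪ C, w i • vecMulVec (u i) (u i))⁻¹ *ᵥ u a))) (by linarith [hq (D ∪ C) a])]
  intro C C' h j hj
  constructor
  · have := hmono C (C' \ C) Finset.disjoint_sdiff
    rwa [Finset.sdiff_union_of_subset h] at this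
  · rw [hins C' j hj, hins C j (fun hc => hj (h hc)), add_sub_cancel_left, add_sub_cancel_left]
    apply Real.log_le_log (by linarith [hq C' j])
    have := aux_inv _ _ (hpd C) (aux_psd u w hw (C' \ C)) (u j)
    rw [add_assoc, add_comm (∑ i ∈ C, _), Finset.sum_sdiff h] at this
    linarith [mul_le_mul_of_nonneg_left this (hw j)]
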